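/- Let A and B be separated cocomplete V-categories and (a₀,b₀) ∈ A × B. Let i(a₀,b₀) denote the least G-ideal above the representable presheaf (a,b) ↦ A(a,a₀) ⊗ B(b,b₀) (which exists, since G-ideals are closed under pointwise infima and the constantly-⊤ presheaf is a G-ideal). Then for every G-ideal ξ on A ⊗ B: (A ⊗_V B)(i(a₀,b₀), ξ) = ⨅_{a,b} [i(a₀,b₀)(a,b), ξ(a,b)] = ξ(a₀,b₀). -/

import Mathlib

/-!
For fixed `v`, the cotensor `(a, b) ↦ [v, ξ a b]` of a G-ideal `ξ` is again a G-ideal, because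
`[v, -]` commutes with infima and with `[w, -]` (`IsGIdeal.cotensor`). With `v = ξ a₀ b₀` this
cotensor lies above the representable at `(a₀, b₀)`, as `ξ` is a presheaf; hence it lies above
`i(a₀, b₀)`, which by adjunction is the inequality `ξ a₀ b₀ ≤ ⨅ [i(a₀, b₀), ξ]`. The converse
inequality is evaluation at `(a₀, b₀)`, where `1 ≤ i(a₀, b₀)`.
-/

/- `V` is a commutative quantale: a complete lattice with a commutative monoid
structure `(*, 1)` distributing over arbitrary suprema. -/
variable {V : Type*} [CommMonoid V] [CompleteLattice V] [IsQuantale V]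

/-- The internal hom `[v,w]` of the commutative quantale `V`. -/
def qhom (v w : V) : V := sSup {u | u * v ≤ w}

/-- A separated cocomplete `V`-category: a `V`-category whose underlying order is
antisymmetric, equipped with `sup : DA → A` satisfying
`A(sup φ, a) = ⨅ a', [φ(a'), A(a',a)]`. -/
structure SupCat (V : Type*) [CommMonoid V] [CompleteLattice V] [IsQuantale V] where
  carrier : Type*
  hom : carrier → carrier → V
  refl : ∀ x, 1 ≤ hom x x
  trans : ∀ x y z, hom x y * hom y z ≤ hom x z
  separated : ∀ x y, 1 ≤ hom x y → 1 ≤ hom y x → x = y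
  sup : {φ : carrier → V // ∀ x y, hom x y * φ y ≤ φ x} → carrier
  hom_sup : ∀ (φ : {φ : carrier → V // ∀ x y, hom x y * φ y ≤ φ x}) (a : carrier),
      hom (sup φ) a = ⨅ a', qhom (φ.1 a') (hom a' a)

/-- The set of contravariant presheaves on a separated cocomplete `V`-category. -/
abbrev PSh (A : SupCat V) := {φ : A.carrier → V // ∀ x y, A.hom x y * φ y ≤ φ x}

/-- A G-ideal on `A ⊗ B`: a presheaf `ξ` on the tensor product `V`-category `A ⊗ B`
such that `⨅_{a,b} [φ(a) ⊗ ψ(b), ξ(a,b)] = ξ(sup_A φ, sup_B ψ)` for all presheaves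
`φ` on `A` and `ψ` on `B`. -/
def IsGIdeal (A B : SupCat V) (ξ : A.carrier → B.carrier → V) : Prop :=
  (∀ a a' b b', A.hom a a' * B.hom b b' * ξ a' b' ≤ ξ a b) ∧
  (∀ (φ : PSh A) (ψ : PSh B),
      (⨅ a, ⨅ b, qhom (φ.1 a * ψ.1 b) (ξ a b)) = ξ (A.sup φ) (B.sup ψ))

/-- The pointwise infimum of all G-ideals above `θ` (the reflection of `θ`
into the tensor product `A ⊗_V B`). -/
def qRefl (A B : SupCat V) (θ : A.carrier → B.carrier → V) :
    A.carrier → B.carrier → V :=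
  fun a b => ⨅ ζ ∈ {ζ : A.carrier → B.carrier → V |
      IsGIdeal A B ζ ∧ ∀ a' b', θ a' b' ≤ ζ a' b'}, ζ a b

/-- The tensor product `A ⊗_V B`: the set of all G-ideals on `A ⊗ B`. -/
def GIdT (A B : SupCat V) := {ξ : A.carrier → B.carrier → V // IsGIdeal A B ξ}

/-- The hom of the `V`-category `A ⊗_V B`. -/
def tHom (A B : SupCat V) (ξ ζ : GIdT A B) : V :=
  ⨅ a, ⨅ b, qhom (ξ.1 a b) (ζ.1 a b)

/-- The universal map `i : A ⊗ B → A ⊗_V B`: the least G-ideal above the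
representable presheaf at `(a₀, b₀)`. -/
def iTensor (A B : SupCat V) (a₀ : A.carrier) (b₀ : B.carrier) :
    A.carrier → B.carrier → V :=
  qRefl A B (fun a b => A.hom a a₀ * B.hom b b₀)

/-- The adjunction between `- * v` and `[v, -]`. -/
lemma le_qhom_iff {u v w : V} : u ≤ qhom v w ↔ u * v ≤ w := by
  refine ⟨fun h => ?_, fun h => le_sSup h⟩
  refine (mul_le_mul_left h v).trans ?_
  rw [qhom, IsQuantale.sSup_mul_distrib]
  exact iSup₂_le fun _ hu => hu

lemma IsGIdeal.cotensor {A B : SupCat V} {ξ : A.carrier → B.carrier → V}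
    (hξ : IsGIdeal A B ξ) (v : V) : IsGIdeal A B (fun a b => qhom v (ξ a b)) := by
  refine ⟨fun a a' b b' => ?_, fun φ ψ => ?_⟩
  · rw [le_qhom_iff, mul_assoc]
    exact (mul_le_mul_right (le_qhom_iff.1 le_rfl) _).trans (hξ.1 a a' b b')
  · refine eq_of_forall_le_iff fun u => ?_
    beta_reduce
    rw [← hξ.2 φ ψ]
    simp only [le_qhom_iff, le_iInf_iff]
    simp only [mul_right_comm u _ v]

/-- `i(a₀, b₀)` is above the representable presheaf, whose value at `(a₀, b₀)` is at least `1`. -/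
lemma one_le_iTensor (A B : SupCat V) (a₀ : A.carrier) (b₀ : B.carrier) :
    1 ≤ iTensor A B a₀ b₀ a₀ b₀ := by
  refine le_iInf₂ fun ζ hζ => le_trans ?_ (hζ.2 a₀ b₀)
  calc (1 : V) = 1 * 1 := (one_mul 1).symm
    _ ≤ _ := mul_le_mul' (A.refl a₀) (B.refl b₀)

/-- For every G-ideal `ξ`,
`(A ⊗_V B)(i(a₀,b₀), ξ) = ⨅_{a,b} [i(a₀,b₀)(a,b), ξ(a,b)] = ξ(a₀,b₀)`. -/
theorem stmt7 (A B : SupCat V) (a₀ : A.carrier) (b₀ : B.carrier)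
    (ξ : A.carrier → B.carrier → V) (hξ : IsGIdeal A B ξ) :
    (⨅ a, ⨅ b, qhom (iTensor A B a₀ b₀ a b) (ξ a b)) = ξ a₀ b₀ := by
  apply le_antisymm
  · refine (iInf₂_le a₀ b₀).trans ?_
    calc qhom (iTensor A B a₀ b₀ a₀ b₀) (ξ a₀ b₀)
        = qhom (iTensor A B a₀ b₀ a₀ b₀) (ξ a₀ b₀) * 1 := (mul_one _).symm
      _ ≤ qhom (iTensor A B a₀ b₀ a₀ b₀) (ξ a₀ b₀) * iTensor A B a₀ b₀ a₀ b₀ :=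
        mul_le_mul_right (one_le_iTensor A B a₀ b₀) _
      _ ≤ ξ a₀ b₀ := le_qhom_iff.1 le_rfl
  · refine le_iInf₂ fun a b => ?_
    rw [le_qhom_iff, mul_comm, ← le_qhom_iff]
    exact iInf₂_le (fun a b => qhom (ξ a₀ b₀) (ξ a b))
      ⟨hξ.cotensor _, fun a' b' => le_qhom_iff.2 (hξ.1 a' a₀ b' b₀)⟩
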